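/- arXiv:2104.10165 — 4 statements merged into one kernel-verified Lean document; each statement's English description precedes it below -/
import Mathlib

section
/- The subgroup G of GL(2,ℂ) generated by the matrices {i, w, d} has order 48. -/
open Matrix Complex
open scoped MatrixGroups

noncomputable section

def iM : Matrix (Fin 2) (Fin 2) ℂ := !![0, 1; -1, 0]
def jM : Matrix (Fin 2) (Fin 2) ℂ := !![0, Complex.I; Complex.I, 0]
def kM : Matrix (Fin 2) (Fin 2) ℂ := !![Complex.I, 0; 0, -Complex.I]
def wM : Matrix (Fin 2) (Fin 2) ℂ :=
  (1 / 2 : ℂ) • !![-1 + Complex.I, 1 + Complex.I; -1 + Complex.I, -1 - Complex.I]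
def cM : Matrix (Fin 2) (Fin 2) ℂ :=
  ((Real.sqrt 2 : ℂ))⁻¹ • !![-Complex.I, Complex.I; Complex.I, Complex.I]
def dM : Matrix (Fin 2) (Fin 2) ℂ :=
  ((Real.sqrt 2 : ℂ))⁻¹ • !![-1, 1; 1, 1]

def G : Subgroup (GL (Fin 2) ℂ) :=
  Subgroup.closure {g : GL (Fin 2) ℂ |
    (g : Matrix (Fin 2) (Fin 2) ℂ) = iM ∨
    (g : Matrix (Fin 2) (Fin 2) ℂ) = wM ∨
    (g : Matrix (Fin 2) (Fin 2) ℂ) = dM}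

/-!
Climb the chain `⟨i⟩ ≤ ⟨i, k⟩ ≤ ⟨i, w⟩ ≤ G`, whose members are cyclic of order 4, the quaternion
group, the binary tetrahedral group and `G`. At each step the new generator `x` (`k`, `w`, `d`)
normalizes the previous subgroup `H`, lies outside it, and has `x ^ p ∈ H` for a prime `p`
(2, 3, 2), so the order is multiplied by `p`: `4 * 2 * 3 * 2 = 48`. The new generator is not in `H`
because `k` does not commute with `i`, the order 3 of `w` does not divide 8, and `det d = -1`
while `⟨i, w⟩ ≤ SL₂(ℂ)`.
-/

section Tower

open Subgroup

variable {Γ : Type*} [Group Γ]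

theorem mem_normalizer_of_pow_mem {H : Subgroup Γ} {x : Γ} {n : ℕ} (hn : n ≠ 0)
    (hxn : x ^ n ∈ H) (hconj : ∀ a ∈ H, x * a * x⁻¹ ∈ H) : x ∈ normalizer (H : Set Γ) := by
  have hconj_pow (m : ℕ) : ∀ a ∈ H, x ^ m * a * (x ^ m)⁻¹ ∈ H := by
    induction m with
    | zero => simp
    | succ m ih =>
      intro a ha
      simpa [pow_succ', mul_assoc] using hconj _ (ih a ha)
  refine mem_normalizer_iff.mpr fun a ↦ ⟨hconj a, fun ha ↦ ?_⟩
  obtain ⟨m, rfl⟩ := Nat.exists_eq_succ_of_ne_zero hn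
  have hmem : x ^ (m + 1) * a * (x ^ (m + 1))⁻¹ ∈ H := by
    simpa [pow_succ, mul_assoc] using hconj_pow m _ ha
  exact (H.mul_mem_cancel_left hxn).mp ((H.mul_mem_cancel_right (H.inv_mem hxn)).mp hmem)

theorem relIndex_sup_of_le_normalizer {H K : Subgroup Γ} (h : K ≤ normalizer (H : Set Γ)) :
    H.relIndex (K ⊔ H) = H.relIndex K :=
  have := normal_subgroupOf_of_le_normalizer h
  have := normal_subgroupOf_sup_of_le_normalizer h
  (Nat.card_congr (QuotientGroup.quotientInfEquivProdNormalizerQuotient K H h).toEquiv).symm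

theorem relIndex_zpowers_eq_prime {H : Subgroup Γ} {x : Γ} {p : ℕ} [Fact p.Prime]
    (hxp : x ^ p ∈ H) (hx : x ∉ H) : H.relIndex (zpowers x) = p := by
  let y : zpowers x := ⟨x, mem_zpowers x⟩
  let f := QuotientGroup.mk' (H.subgroupOf (zpowers x))
  have horder : orderOf (f y) = p :=
    orderOf_eq_prime ((QuotientGroup.eq_one_iff _).mpr (mem_subgroupOf.mpr hxp))
      fun h ↦ hx (mem_subgroupOf.mp ((QuotientGroup.eq_one_iff y).mp h))
  have hgen (q) : q ∈ zpowers (f y) := by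
    obtain ⟨⟨_, n, rfl⟩, rfl⟩ := QuotientGroup.mk'_surjective _ q
    exact ⟨n, (map_zpow f y n).symm⟩
  exact (orderOf_eq_card_of_forall_mem_zpowers hgen).symm.trans horder

theorem card_closure_insert_of_pow_mem {S : Set Γ} {x : Γ} {p : ℕ} [Fact p.Prime]
    (hconj : ∀ s ∈ S, x * s * x⁻¹ ∈ closure S) (hxp : x ^ p ∈ closure S) (hx : x ∉ closure S) :
    Nat.card (closure (insert x S)) = p * Nat.card (closure S) := by
  have hconj_closure : closure S ≤ (closure S).comap (MulAut.conj x).toMonoidHom :=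
    (closure_le _).mpr hconj
  have hnorm : zpowers x ≤ normalizer (closure S : Set Γ) :=
    zpowers_le.mpr (mem_normalizer_of_pow_mem (NeZero.ne p) hxp hconj_closure)
  have hsup : closure (insert x S) = zpowers x ⊔ closure S := by
    rw [Set.insert_eq, Subgroup.closure_union, zpowers_eq_closure]
  rw [hsup, ← relIndex_bot_left, ← relIndex_bot_left,
    ← relIndex_mul_relIndex ⊥ (closure S) _ bot_le le_sup_right,
    relIndex_sup_of_le_normalizer hnorm, relIndex_zpowers_eq_prime hxp hx, mul_comm]

theorem card_closure_quaternion {i j : Γ} (hi : orderOf i = 4) (hj : j ^ 2 = i ^ 2)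
    (hji : j * i * j⁻¹ = i⁻¹) : Nat.card (closure {j, i}) = 8 := by
  have hi_mem : i ∈ closure {i} := mem_closure_singleton_self i
  have hj_notMem : j ∉ closure {i} := by
    intro hmem
    obtain ⟨n, rfl⟩ := mem_closure_singleton.mp hmem
    have hi_inv : i = i⁻¹ := ((Commute.refl i).zpow_left n).mul_inv_cancel.symm.trans hji
    have hi_dvd : orderOf i ∣ 2 :=
      orderOf_dvd_of_pow_eq_one (by rw [sq, mul_eq_one_iff_eq_inv, ← hi_inv])
    norm_num [hi] at hi_dvd
  rw [card_closure_insert_of_pow_mem (p := 2) (by simp [hji]) (hj ▸ pow_mem hi_mem 2) hj_notMem,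
    ← zpowers_eq_closure, Nat.card_zpowers, hi]

theorem card_closure_binaryTetrahedral {i k w : Γ} (hi : orderOf i = 4) (hk : k ^ 2 = i ^ 2)
    (hki : k * i * k⁻¹ = i⁻¹) (hw : orderOf w = 3) (hwi : w * i * w⁻¹ = k)
    (hwk : w * k * w⁻¹ = k * i) : Nat.card (closure {w, i}) = 24 := by
  have hQ : Nat.card (closure {k, i}) = 8 := card_closure_quaternion hi hk hki
  have hi_mem : i ∈ closure {k, i} := mem_closure_of_mem (by simp)
  have hk_mem : k ∈ closure {k, i} := mem_closure_of_mem (by simp)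
  have hw_notMem : w ∉ closure {k, i} := fun hmem ↦ by
    have hw_dvd := Subgroup.orderOf_dvd_natCard _ hmem
    norm_num [hw, hQ] at hw_dvd
  have hw_conj : ∀ s ∈ ({k, i} : Set Γ), w * s * w⁻¹ ∈ closure {k, i} := by
    rintro s (rfl | rfl)
    exacts [hwk ▸ mul_mem hk_mem hi_mem, hwi ▸ hk_mem]
  have hw_cube : w ^ 3 ∈ closure {k, i} := by
    rw [← hw, pow_orderOf_eq_one]
    exact one_mem _
  have hclosure : closure {w, i} = closure {w, k, i} := by
    have hw_mem' : w ∈ closure {w, i} := mem_closure_of_mem (by simp)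
    have hi_mem' : i ∈ closure {w, i} := mem_closure_of_mem (by simp)
    have hk_mem' : k ∈ closure {w, i} :=
      hwi ▸ mul_mem (mul_mem hw_mem' hi_mem') (inv_mem hw_mem')
    refine le_antisymm (closure_mono (by grind)) ((closure_le _).mpr ?_)
    simp [Set.insert_subset_iff, hw_mem', hk_mem', hi_mem']
  rw [hclosure, card_closure_insert_of_pow_mem hw_conj hw_cube hw_notMem, hQ]

end Tower

section Generators

lemma iM_sq : iM ^ 2 = -1 := by simp [iM, sq, one_fin_two]

lemma kM_sq : kM ^ 2 = -1 := by simp [kM, sq, one_fin_two]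

lemma iM_mul_kM_mul_iM : iM * (kM * iM) = kM := by simp [iM, kM]

lemma wM_eq : wM = !![(-1 + I) / 2, (1 + I) / 2; (-1 + I) / 2, (-1 - I) / 2] := by
  simp [wM, div_eq_inv_mul]

lemma wM_pow_three : wM ^ 3 = 1 := by
  rw [wM_eq, pow_three, one_fin_two, mul_fin_two, mul_fin_two]
  congr! 3 <;> grind [I_sq]

lemma wM_mul_iM : wM * iM = kM * wM := by
  rw [wM_eq, iM, kM, mul_fin_two, mul_fin_two]
  congr! 3 <;> grind [I_sq]

lemma wM_mul_kM : wM * kM = kM * iM * wM := by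
  rw [wM_eq, iM, kM, mul_fin_two, mul_fin_two, mul_fin_two]
  congr! 3 <;> grind [I_sq]

lemma inv_sqrt_two_sq : ((Real.sqrt 2 : ℂ))⁻¹ ^ 2 = 1 / 2 := by
  rw [inv_pow, ← ofReal_pow, Real.sq_sqrt zero_le_two, ofReal_ofNat, one_div]

lemma dM_sq : dM ^ 2 = 1 := by
  rw [dM, sq, smul_mul_smul_comm, ← sq, inv_sqrt_two_sq, mul_fin_two, one_fin_two]
  norm_num

lemma iM_mul_dM_mul_iM : iM * (dM * iM) = dM := by simp [iM, dM]

lemma wM_mul_dM_mul_wM : wM * (dM * wM) = dM := by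
  rw [wM_eq, dM, smul_mul_assoc, mul_smul_comm, mul_fin_two, mul_fin_two]
  congr! 4 <;> grind [I_sq]

lemma det_iM : iM.det = 1 := by simp [iM]

lemma det_kM : kM.det = 1 := by simp [kM]

lemma det_wM : wM.det = 1 := by
  rw [wM_eq, det_fin_two_of]
  linear_combination (-1 / 2 : ℂ) * I_sq

lemma det_dM : dM.det = -1 := by
  rw [dM, det_smul, Fintype.card_fin, inv_sqrt_two_sq, det_fin_two_of]
  norm_num

/-- The unit quaternion `i`, acting through the matrix `iM`. -/
def iGL : GL (Fin 2) ℂ := GeneralLinearGroup.mkOfDetNeZero iM (by simp [det_iM])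

/-- The unit quaternion `k`, acting through the matrix `kM`. -/
def kGL : GL (Fin 2) ℂ := GeneralLinearGroup.mkOfDetNeZero kM (by simp [det_kM])

/-- The unit Hurwitz quaternion `w` of order 3, acting through the matrix `wM`. -/
def wGL : GL (Fin 2) ℂ := GeneralLinearGroup.mkOfDetNeZero wM (by simp [det_wM])

/-- The involution `d` of determinant `-1` with matrix `dM`; it is not a unit quaternion. -/
def dGL : GL (Fin 2) ℂ := GeneralLinearGroup.mkOfDetNeZero dM (by simp [det_dM])

lemma G_eq_closure : G = Subgroup.closure {dGL, wGL, iGL} := by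
  have hmem (g : GL (Fin 2) ℂ) : (g.val = iM ∨ g.val = wM ∨ g.val = dM) ↔
      (g = dGL ∨ g = wGL ∨ g = iGL) := by
    rw [Units.ext_iff, Units.ext_iff, Units.ext_iff]
    change _ ↔ (g.val = dM ∨ g.val = wM ∨ g.val = iM)
    tauto
  exact congrArg Subgroup.closure (Set.ext hmem)

lemma orderOf_iGL : orderOf iGL = 4 := by
  refine orderOf_eq_prime_pow (p := 2) (n := 1) (fun h ↦ ?_) (Units.ext ?_)
  · have hi_sq : iM ^ 2 = 1 := congrArg Units.val h
    have h00 := congrFun₂ (iM_sq.symm.trans hi_sq) 0 0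
    norm_num at h00
  · change iM ^ (2 * 2) = 1
    rw [pow_mul, iM_sq, neg_one_sq]

lemma orderOf_wGL : orderOf wGL = 3 := by
  refine orderOf_eq_prime (Units.ext wM_pow_three) fun h ↦ ?_
  have hw_one : wM = 1 := congrArg Units.val h
  have h01 := congrFun₂ hw_one 0 1
  simp [wM, Complex.ext_iff] at h01

lemma kGL_sq : kGL ^ 2 = iGL ^ 2 := Units.ext (kM_sq.trans iM_sq.symm)

lemma kGL_conj_iGL : kGL * iGL * kGL⁻¹ = iGL⁻¹ :=
  mul_inv_eq_of_eq_mul (eq_inv_mul_of_mul_eq (Units.ext iM_mul_kM_mul_iM))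

lemma wGL_conj_iGL : wGL * iGL * wGL⁻¹ = kGL := mul_inv_eq_of_eq_mul (Units.ext wM_mul_iM)

lemma wGL_conj_kGL : wGL * kGL * wGL⁻¹ = kGL * iGL := mul_inv_eq_of_eq_mul (Units.ext wM_mul_kM)

lemma dGL_conj_iGL : dGL * iGL * dGL⁻¹ = iGL⁻¹ :=
  mul_inv_eq_of_eq_mul (eq_inv_mul_of_mul_eq (Units.ext iM_mul_dM_mul_iM))

lemma dGL_conj_wGL : dGL * wGL * dGL⁻¹ = wGL⁻¹ :=
  mul_inv_eq_of_eq_mul (eq_inv_mul_of_mul_eq (Units.ext wM_mul_dM_mul_wM))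

lemma dGL_notMem_closure_wGL_iGL : dGL ∉ Subgroup.closure {wGL, iGL} := by
  have hle : Subgroup.closure {wGL, iGL} ≤ GeneralLinearGroup.det.ker := by
    rw [Subgroup.closure_le]
    rintro _ (rfl | rfl)
    exacts [Units.ext det_wM, Units.ext det_iM]
  intro hmem
  have hdet : dM.det = 1 := congrArg Units.val (MonoidHom.mem_ker.mp (hle hmem))
  norm_num [det_dM] at hdet

end Generators

theorem binary_octahedral_group_order : Nat.card G = 48 := by
  have hT : Nat.card (Subgroup.closure {wGL, iGL}) = 24 :=
    card_closure_binaryTetrahedral orderOf_iGL kGL_sq kGL_conj_iGL orderOf_wGL wGL_conj_iGL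
      wGL_conj_kGL
  have hd_conj : ∀ s ∈ ({wGL, iGL} : Set _), dGL * s * dGL⁻¹ ∈ Subgroup.closure {wGL, iGL} := by
    rintro s (rfl | rfl)
    · exact dGL_conj_wGL ▸ inv_mem (Subgroup.mem_closure_of_mem (by simp))
    · exact dGL_conj_iGL ▸ inv_mem (Subgroup.mem_closure_of_mem (by simp))
  have hd_sq : dGL ^ 2 ∈ Subgroup.closure {wGL, iGL} :=
    (Units.ext dM_sq : dGL ^ 2 = 1) ▸ one_mem _
  rw [G_eq_closure, card_closure_insert_of_pow_mem hd_conj hd_sq dGL_notMem_closure_wGL_iGL, hT]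
end
end

section
/- The group G has exactly 8 conjugacy classes. -/
open Matrix Complex
open scoped MatrixGroups

noncomputable section

/-!
`G` is isomorphic to `GL₂(𝔽₃)`, and `GL₂` of a field with `q` elements has `q ^ 2 - 1` conjugacy
classes: a scalar matrix is alone in its class, and any other matrix is conjugate to its companion
matrix, hence determined by its trace and determinant.

For the isomorphism, `G` preserves a lattice over `ℤ[√-2]` and is reduced modulo `π = 1 - √-2`,
whose residue field is `𝔽₃`. Surjectivity is the Bruhat decomposition. If `g ∈ G` reduces to `1`,
then `det g` is a unit congruent to `1`, so `det g = 1`. Being unitary of determinant `1`, `g` has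
real trace `n`, which is then an integer with `|n| ≤ 2`, and `π ^ 2` divides `det (g - 1) = 2 - n`,
so that `9 ∣ 2 - n`. Hence `n = 2`, which forces `g = 1` since `g` is unitary.
-/

section ConjClasses

lemma card_conjClasses_congr {M N : Type*} [Monoid M] [Monoid N] (e : M ≃* N) :
    Nat.card (ConjClasses M) = Nat.card (ConjClasses N) := by
  refine Nat.card_eq_of_bijective (ConjClasses.map e.toMonoidHom)
    ⟨?_, ConjClasses.map_surjective e.surjective⟩
  rintro ⟨a⟩ ⟨b⟩ h
  have := e.symm.toMonoidHom.map_isConj (ConjClasses.mk_eq_mk_iff_isConj.mp h)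
  simpa [ConjClasses.quot_mk_eq_mk, ConjClasses.mk_eq_mk_iff_isConj] using this

section CommRing

variable {R : Type*} [CommRing R]

lemma trace_eq_of_isConj {n : Type*} [Fintype n] [DecidableEq n] {g h : GL n R}
    (hgh : IsConj g h) : g.val.trace = h.val.trace := by
  obtain ⟨c, rfl⟩ := isConj_iff.mp hgh
  exact (trace_units_conj c g.val).symm

lemma det_eq_of_isConj {n : Type*} [Fintype n] [DecidableEq n] {g h : GL n R}
    (hgh : IsConj g h) : g.det = h.det :=
  isConj_iff_eq.mp (GeneralLinearGroup.det.map_isConj hgh)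

lemma card_center_GL {n : Type*} [Fintype n] [DecidableEq n] [Nonempty n] :
    Nat.card (Subgroup.center (GL n R)) = Nat.card Rˣ := by
  have scalar_injective : Function.Injective (GeneralLinearGroup.scalar n : Rˣ →* GL n R) :=
    fun _ _ h ↦ Units.ext (scalar_inj.mp (congrArg Units.val h))
  rw [GeneralLinearGroup.center_eq_range_scalar]
  exact Nat.card_congr (MonoidHom.ofInjective scalar_injective).toEquiv.symm

/-- The Krylov matrix of `A` at `v`, with columns `v` and `A v`. It conjugates `A` to its companion
matrix as soon as `v` is a cyclic vector. -/
def krylov (A : Matrix (Fin 2) (Fin 2) R) (v : Fin 2 → R) : Matrix (Fin 2) (Fin 2) R :=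
  (of ![v, A *ᵥ v])ᵀ

lemma krylov_mul_companion (A : Matrix (Fin 2) (Fin 2) R) (v : Fin 2 → R) :
    krylov A v * !![0, -A.det; 1, A.trace] = A * krylov A v := by
  ext i j
  fin_cases i <;> fin_cases j <;>
    simp only [krylov, mulVec_fin_two, det_fin_two, trace_fin_two, mul_apply, Fin.sum_univ_two,
      transpose_apply, of_apply, cons_val', cons_val_zero, cons_val_one, cons_val_fin_one,
      Fin.zero_eta, Fin.mk_one] <;>
    ring

lemma det_krylov (A : Matrix (Fin 2) (Fin 2) R) (v : Fin 2 → R) :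
    (krylov A v).det = A 1 0 * v 0 ^ 2 + (A 1 1 - A 0 0) * (v 0 * v 1) - A 0 1 * v 1 ^ 2 := by
  simp only [krylov, mulVec_fin_two, det_transpose, det_fin_two, of_apply, cons_val', cons_val_zero,
    cons_val_one, cons_val_fin_one]
  ring

lemma exists_det_krylov_ne_zero {A : Matrix (Fin 2) (Fin 2) R}
    (hA : A ∉ Set.range (scalar (Fin 2))) : ∃ v, (krylov A v).det ≠ 0 := by
  contrapose! hA
  have h10 : A 1 0 = 0 := by simpa [det_krylov] using hA ![1, 0]
  have h01 : A 0 1 = 0 := by simpa [det_krylov] using hA ![0, 1]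
  have hdiag : A 1 1 = A 0 0 := by simpa [det_krylov, h10, h01, sub_eq_zero] using hA ![1, 1]
  refine ⟨A 0 0, ?_⟩
  ext i j
  fin_cases i <;> fin_cases j <;> simp [h10, h01, hdiag]

end CommRing

variable {K : Type*} [Field K]

/-- The companion matrix of `X ^ 2 - t X + δ`, as an invertible matrix. -/
def companion (t : K) (δ : Kˣ) : GL (Fin 2) K :=
  GeneralLinearGroup.mkOfDetNeZero !![0, -(δ : K); 1, t] (by simp)

lemma coe_companion (t : K) (δ : Kˣ) : (companion t δ).val = !![0, -(δ : K); 1, t] := rfl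

lemma trace_companion (t : K) (δ : Kˣ) : (companion t δ).val.trace = t := by
  simp [coe_companion]

lemma det_companion (t : K) (δ : Kˣ) : (companion t δ).det = δ := by
  ext
  simp [coe_companion]

lemma companion_notMem_center (t : K) (δ : Kˣ) :
    companion t δ ∉ Subgroup.center (GL (Fin 2) K) := by
  rw [GeneralLinearGroup.mem_center_iff_val_mem_range_scalar]
  rintro ⟨a, ha⟩
  simpa [coe_companion] using congr_fun₂ ha 1 0

lemma isConj_companion {g : GL (Fin 2) K} (hg : g ∉ Subgroup.center (GL (Fin 2) K)) :
    IsConj (companion g.val.trace g.det) g := by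
  rw [GeneralLinearGroup.mem_center_iff_val_mem_range_scalar] at hg
  obtain ⟨v, hv⟩ := exists_det_krylov_ne_zero hg
  refine isConj_iff.mpr ⟨GeneralLinearGroup.mkOfDetNeZero (krylov g.val v) hv, ?_⟩
  exact mul_inv_eq_of_eq_mul (Units.ext (krylov_mul_companion g.val v))

/-- Representatives of the conjugacy classes of `GL₂(K)`: the scalar matrices and the companion
matrices. -/
def rationalCanonicalForm : Subgroup.center (GL (Fin 2) K) ⊕ K × Kˣ → GL (Fin 2) K :=
  Sum.elim (↑) fun p ↦ companion p.1 p.2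

lemma exists_isConj_rationalCanonicalForm (g : GL (Fin 2) K) :
    ∃ x, IsConj (rationalCanonicalForm x) g := by
  by_cases hg : g ∈ Subgroup.center (GL (Fin 2) K)
  · exact ⟨.inl ⟨g, hg⟩, .refl g⟩
  · exact ⟨.inr (g.val.trace, g.det), isConj_companion hg⟩

lemma eq_of_isConj_rationalCanonicalForm {x y : Subgroup.center (GL (Fin 2) K) ⊕ K × Kˣ}
    (h : IsConj (rationalCanonicalForm x) (rationalCanonicalForm y)) : x = y := by
  rcases x with z | ⟨t, δ⟩ <;> rcases y with z' | ⟨t', δ'⟩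
  · exact congrArg Sum.inl (Subtype.ext (h.eq_of_left_mem_center z.2))
  · have heq : z.1 = companion t' δ' := h.eq_of_left_mem_center z.2
    exact absurd (heq ▸ z.2) (companion_notMem_center t' δ')
  · have heq : companion t δ = z'.1 := h.eq_of_right_mem_center z'.2
    exact absurd (heq ▸ z'.2) (companion_notMem_center t δ)
  · have ht := trace_eq_of_isConj h
    have hδ := det_eq_of_isConj h
    simp only [rationalCanonicalForm, Sum.elim_inr, trace_companion, det_companion] at ht hδ
    rw [ht, hδ]

theorem card_conjClasses_GL_fin_two [Finite K] :
    Nat.card (ConjClasses (GL (Fin 2) K)) = Nat.card K ^ 2 - 1 := by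
  have hbij : Function.Bijective fun x ↦ ConjClasses.mk (rationalCanonicalForm (K := K) x) := by
    refine ⟨fun x y h ↦
      eq_of_isConj_rationalCanonicalForm (ConjClasses.mk_eq_mk_iff_isConj.mp h), fun C ↦ ?_⟩
    obtain ⟨g, rfl⟩ := ConjClasses.exists_rep C
    obtain ⟨x, hx⟩ := exists_isConj_rationalCanonicalForm g
    exact ⟨x, ConjClasses.mk_eq_mk_iff_isConj.mpr hx⟩
  calc Nat.card (ConjClasses (GL (Fin 2) K))
      = Nat.card Kˣ + Nat.card K * Nat.card Kˣ := by
        rw [← Nat.card_eq_of_bijective _ hbij, Nat.card_sum, Nat.card_prod, card_center_GL]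
    _ = (Nat.card K + 1) * (Nat.card K - 1) := by rw [Nat.card_units]; ring
    _ = Nat.card K ^ 2 - 1 := (Nat.sq_sub_sq _ 1).symm

end ConjClasses

section Bruhat

open GeneralLinearGroup

variable {K : Type*} [Field K]

lemma coe_upperRightHom_mul {R : Type*} [CommRing R] (x : R) (g : GL (Fin 2) R) :
    (upperRightHom x * g).val =
      !![g.val 0 0 + x * g.val 1 0, g.val 0 1 + x * g.val 1 1; g.val 1 0, g.val 1 1] := by
  rw [Units.val_mul, upperRightHom_apply]
  nth_rw 1 [eta_fin_two g.val]
  simp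

variable {H : Subgroup (GL (Fin 2) K)}

lemma mem_of_apply_one_zero_eq_zero (hU : ∀ x, upperRightHom x ∈ H)
    (hD : ∀ d : GL (Fin 2) K, d.val.IsDiag → d ∈ H) {g : GL (Fin 2) K} (hg : g.val 1 0 = 0) :
    g ∈ H := by
  have h11 : g.val 1 1 ≠ 0 := fun h ↦ g.det_ne_zero (by simp [det_fin_two, hg, h])
  rw [← H.mul_mem_cancel_left (hU (-(g.val 0 1 / g.val 1 1)))]
  refine hD _ fun i j hij ↦ ?_
  rw [coe_upperRightHom_mul]
  fin_cases i <;> fin_cases j <;> first | exact absurd rfl hij | simp [hg, h11]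

/-- Outside the Borel subgroup, a unipotent followed by `w` clears the lower left entry: this is the
Bruhat decomposition. -/
lemma eq_top_of_upperRightHom_mem (hU : ∀ x, upperRightHom x ∈ H)
    (hD : ∀ d : GL (Fin 2) K, d.val.IsDiag → d ∈ H)
    {w : GL (Fin 2) K} (hw : w.val = !![0, 1; -1, 0]) (hwH : w ∈ H) : H = ⊤ := by
  refine eq_top_iff.mpr fun g _ ↦ ?_
  by_cases hg : g.val 1 0 = 0
  · exact mem_of_apply_one_zero_eq_zero hU hD hg
  · rw [← H.mul_mem_cancel_left (hU (-(g.val 0 0 / g.val 1 0))), ← H.mul_mem_cancel_left hwH]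
    apply mem_of_apply_one_zero_eq_zero hU hD
    rw [Units.val_mul, hw, coe_upperRightHom_mul]
    simp [hg]

end Bruhat

section Unitary

variable {n 𝕜 : Type*} [Fintype n] [DecidableEq n] [RCLike 𝕜] {U : Matrix n n 𝕜}

lemma star_fin_two_of {R : Type*} [Star R] (a b c d : R) :
    star !![a, b; c, d] = !![star a, star c; star b, star d] := by
  rw [star_eq_conjTranspose]
  ext i j
  fin_cases i <;> fin_cases j <;> rfl

lemma norm_trace_le_card (hU : U ∈ unitaryGroup n 𝕜) : ‖U.trace‖ ≤ Fintype.card n := by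
  calc ‖U.trace‖ ≤ ∑ i, ‖U i i‖ := norm_sum_le _ _
    _ ≤ ∑ _i : n, 1 := Finset.sum_le_sum fun i _ ↦ entry_norm_bound_of_unitary hU i i
    _ = Fintype.card n := by simp

open ComplexOrder in
lemma eq_one_of_trace_eq_card (hU : U ∈ unitaryGroup n 𝕜) (h : U.trace = Fintype.card n) :
    U = 1 := by
  have hU' : Uᴴ * U = 1 := mem_unitaryGroup_iff'.mp hU
  rw [← sub_eq_zero, ← trace_conjTranspose_mul_self_eq_zero_iff]
  simp [sub_mul, mul_sub, hU', h, trace_conjTranspose]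

lemma star_trace_of_det_eq_one {R : Type*} [CommRing R] [StarRing R]
    {V : Matrix (Fin 2) (Fin 2) R} (hV : V ∈ unitaryGroup (Fin 2) R) (hdet : V.det = 1) :
    star V.trace = V.trace := by
  have hadj : Vᴴ = V.adjugate := by
    calc Vᴴ = Vᴴ * (V * V.adjugate) := by rw [mul_adjugate, hdet, one_smul, mul_one]
      _ = V.adjugate := by
        rw [← mul_assoc, ← star_eq_conjTranspose, mem_unitaryGroup_iff'.mp hV, one_mul]
  rw [← trace_conjTranspose, hadj, adjugate_fin_two, trace_fin_two_of, trace_fin_two, add_comm]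

lemma mem_units_unitaryGroup {R : Type*} [CommRing R] [StarRing R] {g : GL n R}
    (hg : g.val ∈ unitaryGroup n R) : g ∈ (unitaryGroup n R).units := by
  have hinv : g⁻¹.val = star g.val := Units.inv_eq_of_mul_eq_one_right (mem_unitaryGroup_iff.mp hg)
  exact Submonoid.mem_units_of_val_mem_inv_val_mem _ hg (hinv ▸ Unitary.star_mem hg)

end Unitary

section Determinant

variable {R : Type*} [CommRing R]

lemma det_sub_one_fin_two (A : Matrix (Fin 2) (Fin 2) R) :
    (A - 1).det = A.det - A.trace + 1 := by
  simp only [det_fin_two, trace_fin_two, Matrix.sub_apply, one_apply_eq, one_apply_ne, ne_eq,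
    zero_ne_one, one_ne_zero, not_false_eq_true]
  ring

lemma pow_card_dvd_det {n : Type*} [Fintype n] [DecidableEq n] {A : Matrix n n R} {r : R}
    (h : ∀ i j, r ∣ A i j) : r ^ Fintype.card n ∣ A.det := by
  choose B hB using h
  have hA : A = r • of B := by ext i j; simp [hB]
  exact ⟨(of B).det, by rw [hA, det_smul]⟩

end Determinant

section IntegralModel

open Zsqrtd

/-- Reduction of `ℤ[√-2]` modulo the prime `1 - √-2` above `3`. -/
def reduction : ℤ√(-2) →+* ZMod 3 := Zsqrtd.lift ⟨1, by decide⟩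

lemma reduction_apply (x : ℤ√(-2)) : reduction x = ((x.re + x.im : ℤ) : ZMod 3) := by
  simp [reduction]

lemma one_sub_sqrtd_dvd {x : ℤ√(-2)} (hx : reduction x = 0) : 1 - sqrtd ∣ x := by
  rw [reduction_apply, ZMod.intCast_zmod_eq_zero_iff_dvd] at hx
  obtain ⟨m, hm⟩ := hx
  have hre : x.re = 3 * m - x.im := eq_sub_of_add_eq hm
  exact ⟨⟨m - x.im, m⟩, Zsqrtd.ext (by simp [hre]; ring) (by simp)⟩

lemma nine_dvd_of_one_sub_sqrtd_sq_dvd {n : ℤ} (h : (1 - sqrtd : ℤ√(-2)) ^ 2 ∣ n) : 9 ∣ n := by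
  obtain ⟨y, hy⟩ := h
  have hre := congrArg Zsqrtd.re hy
  have him := congrArg Zsqrtd.im hy
  simp only [pow_two, re_intCast, im_intCast, re_mul, im_mul, re_sub, im_sub, re_one, im_one,
    re_sqrtd, im_sqrtd] at hre him
  omega

lemma unit_eq_one_of_reduction_eq_one {u : (ℤ√(-2))ˣ} (h : reduction u = 1) : u = 1 := by
  have hnorm : u.val.re ^ 2 + 2 * u.val.im ^ 2 = 1 := by
    have := (Zsqrtd.norm_eq_one_iff' (by norm_num) u.val).mpr u.isUnit
    rw [Zsqrtd.norm_def] at this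
    linarith
  have him : u.val.im = 0 := by nlinarith
  have hre : u.val.re = 1 ∨ u.val.re = -1 := by
    rw [← sq_eq_one_iff]
    simpa [him] using hnorm
  rw [reduction_apply, him] at h
  rcases hre with hre | hre
  · ext <;> simp [hre, him]
  · rw [hre] at h
    exact absurd h (by decide)

/-- The embedding of `ℤ[√-2]` into `ℂ` sending `√-2` to `√2 𝕚`. -/
def embedding : ℤ√(-2) →+* ℂ :=
  Zsqrtd.lift ⟨I * √2, by
    rw [mul_mul_mul_comm, I_mul_I, ← ofReal_mul, Real.mul_self_sqrt zero_le_two]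
    norm_num⟩

lemma embedding_apply (x : ℤ√(-2)) : embedding x = x.re + x.im * (I * √2) := by
  simp [embedding]

lemma embedding_injective : Function.Injective embedding :=
  Zsqrtd.lift_injective _ fun n h ↦ by nlinarith [mul_self_nonneg n]

lemma eq_intCast_of_star_embedding_eq {x : ℤ√(-2)} (h : star (embedding x) = embedding x) :
    x = x.re := by
  have him : x.im = 0 := by simpa [embedding_apply] using conj_eq_iff_im.mp h
  ext <;> simp [him]

lemma sqrt_two_sq : (√2 : ℂ) ^ 2 = 2 := by
  rw [← ofReal_pow, Real.sq_sqrt zero_le_two, ofReal_ofNat]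

lemma inv_sqrt_two : (√2 : ℂ)⁻¹ = √2 / 2 := by
  grind [sqrt_two_sq]

/-- A matrix whose columns are a basis of a `ℤ[√-2]`-lattice in `ℂ²` stable under `G`. With `v` the
first column, which spans the eigenspace of `d` for `-1`, the second is
`(i v - (1 - √-2) v) / 2`. -/
def latticeBasis : GL (Fin 2) ℂ :=
  GeneralLinearGroup.mkOfDetNeZero
    !![1, √2 / 2 * (I - 1); 1 - √2, (√2 / 2 - 1) * (1 + I)] <| by
      have hdet : det !![1, √2 / 2 * (I - 1); 1 - √2, (√2 / 2 - 1) * (1 + I)] = √2 - 2 := by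
        rw [det_fin_two_of]
        grind [sqrt_two_sq]
      rw [hdet, sub_ne_zero]
      grind [sqrt_two_sq]

lemma coe_latticeBasis :
    latticeBasis.val = !![1, √2 / 2 * (I - 1); 1 - √2, (√2 / 2 - 1) * (1 + I)] := rfl

/-- The homomorphism `GL₂(ℤ[√-2]) → GL₂(ℂ)` obtained by viewing an integral matrix as acting on
the lattice spanned by `latticeBasis`. -/
def latticeHom : GL (Fin 2) (ℤ√(-2)) →* GL (Fin 2) ℂ :=
  (MulAut.conj latticeBasis).toMonoidHom.comp (GeneralLinearGroup.map embedding)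

lemma coe_latticeHom (g : GL (Fin 2) (ℤ√(-2))) :
    (latticeHom g).val = latticeBasis.val * g.val.map embedding * latticeBasis⁻¹.val := rfl

lemma coe_latticeHom_eq {g : GL (Fin 2) (ℤ√(-2))} {A : Matrix (Fin 2) (Fin 2) ℂ}
    (h : latticeBasis.val * g.val.map embedding = A * latticeBasis.val) :
    (latticeHom g).val = A := by
  rw [coe_latticeHom, h, mul_assoc, Units.mul_inv, mul_one]

lemma latticeHom_injective : Function.Injective latticeHom :=
  (MulAut.conj latticeBasis).injective.comp <|
    Units.map_injective <| Matrix.map_injective embedding_injective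

lemma trace_latticeHom (g : GL (Fin 2) (ℤ√(-2))) :
    (latticeHom g).val.trace = embedding g.val.trace := by
  rw [coe_latticeHom, trace_units_conj, AddMonoidHom.map_trace]

lemma det_latticeHom (g : GL (Fin 2) (ℤ√(-2))) :
    (latticeHom g).val.det = embedding g.val.det := by
  rw [coe_latticeHom, det_units_conj]
  exact (embedding.map_det _).symm

/-- The generator `i` of `G` in the basis `latticeBasis`. -/
def integralI : GL (Fin 2) (ℤ√(-2)) :=
  ⟨!![⟨1, -1⟩, ⟨0, 1⟩; 2, ⟨-1, 1⟩], !![⟨-1, 1⟩, ⟨0, -1⟩; -2, ⟨1, -1⟩], by decide, by decide⟩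

/-- The generator `w` of `G` in the basis `latticeBasis`. -/
def integralW : GL (Fin 2) (ℤ√(-2)) :=
  ⟨!![⟨-1, -1⟩, 1; ⟨1, -1⟩, ⟨0, 1⟩], !![⟨0, 1⟩, -1; ⟨-1, 1⟩, ⟨-1, -1⟩], by decide, by decide⟩

/-- The generator `d` of `G` in the basis `latticeBasis`. -/
def integralD : GL (Fin 2) (ℤ√(-2)) :=
  ⟨!![-1, ⟨1, -1⟩; 0, 1], !![-1, ⟨1, -1⟩; 0, 1], by decide, by decide⟩

lemma map_embedding_integralI :
    integralI.val.map embedding = !![1 - I * √2, I * √2; 2, I * √2 - 1] := by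
  ext i j
  fin_cases i <;> fin_cases j <;>
    simp [integralI, embedding_apply, sub_eq_add_neg, add_comm]

lemma map_embedding_integralW :
    integralW.val.map embedding = !![-1 - I * √2, 1; 1 - I * √2, I * √2] := by
  ext i j
  fin_cases i <;> fin_cases j <;> simp [integralW, embedding_apply, sub_eq_add_neg, add_comm]

lemma map_embedding_integralD : integralD.val.map embedding = !![-1, 1 - I * √2; 0, 1] := by
  ext i j
  fin_cases i <;> fin_cases j <;> simp [integralD, embedding_apply, sub_eq_add_neg]

lemma latticeHom_integralI : (latticeHom integralI).val = iM := by
  refine coe_latticeHom_eq ?_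
  rw [map_embedding_integralI, coe_latticeBasis, iM, mul_fin_two, mul_fin_two]
  simp only [EmbeddingLike.apply_eq_iff_eq, vecCons_inj, and_true]
  refine ⟨⟨?_, ?_⟩, ?_, ?_⟩ <;> grind [sqrt_two_sq, I_sq]

lemma latticeHom_integralW : (latticeHom integralW).val = wM := by
  refine coe_latticeHom_eq ?_
  rw [map_embedding_integralW, coe_latticeBasis, wM, smul_mul, mul_fin_two, mul_fin_two]
  simp only [smul_of, smul_cons, smul_empty, smul_eq_mul, EmbeddingLike.apply_eq_iff_eq,
    vecCons_inj, and_true]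
  refine ⟨⟨?_, ?_⟩, ?_, ?_⟩ <;> grind [sqrt_two_sq, I_sq]

lemma latticeHom_integralD : (latticeHom integralD).val = dM := by
  refine coe_latticeHom_eq ?_
  rw [map_embedding_integralD, coe_latticeBasis, dM, inv_sqrt_two, smul_mul, mul_fin_two,
    mul_fin_two]
  simp only [smul_of, smul_cons, smul_empty, smul_eq_mul, EmbeddingLike.apply_eq_iff_eq,
    vecCons_inj, and_true]
  refine ⟨⟨?_, ?_⟩, ?_, ?_⟩ <;> grind [sqrt_two_sq, I_sq]

/-- The group `G` in the basis `latticeBasis`. -/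
def integralG : Subgroup (GL (Fin 2) (ℤ√(-2))) :=
  Subgroup.closure {integralI, integralW, integralD}

lemma map_latticeHom_integralG : integralG.map latticeHom = G := by
  rw [integralG, MonoidHom.map_closure, G]
  congr 1
  ext g
  simp [Set.image_insert_eq, Units.ext_iff, latticeHom_integralI, latticeHom_integralW,
    latticeHom_integralD]

lemma iM_mem_unitaryGroup : iM ∈ unitaryGroup (Fin 2) ℂ := by
  rw [mem_unitaryGroup_iff, iM, star_fin_two_of, mul_fin_two, one_fin_two]
  simp

lemma wM_mem_unitaryGroup : wM ∈ unitaryGroup (Fin 2) ℂ := by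
  have hstar : star wM = (1 / 2 : ℂ) • !![-1 - I, -1 - I; 1 - I, -1 + I] := by
    simp [wM, star_fin_two_of, sub_eq_add_neg]
  rw [mem_unitaryGroup_iff, hstar, wM, smul_mul_smul_comm, mul_fin_two, one_fin_two]
  simp only [smul_of, smul_cons, smul_empty, smul_eq_mul, EmbeddingLike.apply_eq_iff_eq,
    vecCons_inj, and_true]
  refine ⟨⟨?_, ?_⟩, ?_, ?_⟩ <;> grind [I_sq]

lemma dM_mem_unitaryGroup : dM ∈ unitaryGroup (Fin 2) ℂ := by
  have hstar : star dM = dM := by simp [dM, star_fin_two_of]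
  rw [mem_unitaryGroup_iff, hstar, dM, smul_mul_smul_comm, ← pow_two, inv_pow, sqrt_two_sq,
    mul_fin_two, one_fin_two]
  simp only [smul_of, smul_cons, smul_empty, smul_eq_mul, EmbeddingLike.apply_eq_iff_eq,
    vecCons_inj, and_true]
  norm_num

lemma G_le_units_unitaryGroup : G ≤ (unitaryGroup (Fin 2) ℂ).units := by
  rw [G, Subgroup.closure_le]
  rintro g (hg | hg | hg) <;> apply mem_units_unitaryGroup <;> rw [hg]
  exacts [iM_mem_unitaryGroup, wM_mem_unitaryGroup, dM_mem_unitaryGroup]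

lemma one_sub_sqrtd_sq_dvd_det_sub_one {A : Matrix (Fin 2) (Fin 2) (ℤ√(-2))}
    (hA : A.map reduction = 1) : (1 - sqrtd) ^ 2 ∣ (A - 1).det := by
  refine pow_card_dvd_det fun i j ↦ one_sub_sqrtd_dvd ?_
  have hij : reduction (A i j) = (1 : Matrix (Fin 2) (Fin 2) (ZMod 3)) i j := congr_fun₂ hA i j
  rw [Matrix.sub_apply, map_sub, hij]
  fin_cases i <;> fin_cases j <;> simp

lemma det_eq_one_of_map_reduction_eq_one {g : GL (Fin 2) (ℤ√(-2))}
    (hg : GeneralLinearGroup.map reduction g = 1) : g.val.det = 1 := by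
  have hred : reduction g.det = 1 := by
    have := GeneralLinearGroup.map_det reduction g
    rw [hg, map_one] at this
    exact congrArg Units.val this.symm
  exact congrArg Units.val (unit_eq_one_of_reduction_eq_one hred)

lemma eq_one_of_map_reduction_eq_one {g : GL (Fin 2) (ℤ√(-2))}
    (hU : (latticeHom g).val ∈ unitaryGroup (Fin 2) ℂ)
    (hg : GeneralLinearGroup.map reduction g = 1) : g = 1 := by
  have hdet : g.val.det = 1 := det_eq_one_of_map_reduction_eq_one hg
  obtain ⟨n, hn⟩ : ∃ n : ℤ, g.val.trace = n := by
    refine ⟨_, eq_intCast_of_star_embedding_eq ?_⟩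
    rw [← trace_latticeHom]
    exact star_trace_of_det_eq_one hU (by rw [det_latticeHom, hdet, map_one])
  have htrace : (latticeHom g).val.trace = n := by rw [trace_latticeHom, hn, map_intCast]
  have hdvd : 9 ∣ 2 - n := by
    apply nine_dvd_of_one_sub_sqrtd_sq_dvd
    have hdet_sub : (g.val - 1).det = (2 - n : ℤ) := by
      rw [det_sub_one_fin_two, hdet, hn]
      push_cast
      ring
    exact hdet_sub ▸ one_sub_sqrtd_sq_dvd_det_sub_one (congrArg Units.val hg)
  have hle : |n| ≤ 2 := by
    have := norm_trace_le_card hU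
    rw [htrace, Complex.norm_intCast, Fintype.card_fin] at this
    exact_mod_cast this
  have hn_two : n = 2 := by
    have := abs_le.mp hle
    omega
  have hone : (latticeHom g).val = 1 :=
    eq_one_of_trace_eq_card hU (by rw [htrace, hn_two]; simp)
  exact latticeHom_injective ((Units.ext hone).trans (map_one latticeHom).symm)

lemma coe_map_reduction_integralI :
    (GeneralLinearGroup.map reduction integralI).val = !![0, 1; -1, 0] := by
  decide

lemma coe_map_reduction_integralW :
    (GeneralLinearGroup.map reduction integralW).val = !![1, 1; 0, 1] := by
  decide

lemma coe_map_reduction_integralD :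
    (GeneralLinearGroup.map reduction integralD).val = !![-1, 0; 0, 1] := by
  decide

section Generation

variable {i w d : GL (Fin 2) (ZMod 3)}

lemma upperRightHom_eq_pow (hw : w.val = !![1, 1; 0, 1]) (x : ZMod 3) :
    GeneralLinearGroup.upperRightHom x = w ^ x.val := by
  have hw_one : w = GeneralLinearGroup.upperRightHom 1 := Units.ext hw
  rw [hw_one, ← AddChar.map_nsmul_eq_pow, nsmul_one, ZMod.natCast_zmod_val]

lemma exists_eq_pow_mul_pow_of_isDiag (hi : i.val = !![0, 1; -1, 0]) (hd : d.val = !![-1, 0; 0, 1])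
    {g : GL (Fin 2) (ZMod 3)} (hg : g.val.IsDiag) : ∃ k l, g = d ^ k * (i ^ 2) ^ l := by
  have eq_one_or_neg_one : ∀ a : ZMod 3, a ≠ 0 → a = 1 ∨ a = -1 := by decide
  have hg_eta : g.val = !![g.val 0 0, 0; 0, g.val 1 1] := by
    conv_lhs => rw [eta_fin_two g.val, hg zero_ne_one, hg one_ne_zero]
  have hdet := g.det_ne_zero
  rw [hg_eta, det_fin_two_of, mul_zero, sub_zero, mul_ne_zero_iff] at hdet
  rcases eq_one_or_neg_one _ hdet.1 with h₀ | h₀ <;>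
    rcases eq_one_or_neg_one _ hdet.2 with h₁ | h₁ <;> rw [h₀, h₁] at hg_eta
  · exact ⟨0, 0, Units.ext (by simp [hg_eta, one_fin_two])⟩
  · exact ⟨1, 1, Units.ext (by simp [hg_eta, hi, hd, pow_two])⟩
  · exact ⟨1, 0, Units.ext (by simp [hg_eta, hd])⟩
  · exact ⟨0, 1, Units.ext (by simp [hg_eta, hi, pow_two])⟩

lemma GL_fin_two_zmod_three_eq_top_of_mem {H : Subgroup (GL (Fin 2) (ZMod 3))}
    (hi : i.val = !![0, 1; -1, 0]) (hw : w.val = !![1, 1; 0, 1]) (hd : d.val = !![-1, 0; 0, 1])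
    (hiH : i ∈ H) (hwH : w ∈ H) (hdH : d ∈ H) : H = ⊤ := by
  refine eq_top_of_upperRightHom_mem (fun x ↦ ?_) (fun g hg ↦ ?_) hi hiH
  · exact upperRightHom_eq_pow hw x ▸ pow_mem hwH _
  · obtain ⟨k, l, rfl⟩ := exists_eq_pow_mul_pow_of_isDiag hi hd hg
    exact mul_mem (pow_mem hdH k) (pow_mem (pow_mem hiH 2) l)

end Generation

lemma map_map_reduction_integralG :
    integralG.map (GeneralLinearGroup.map reduction) = ⊤ := by
  have mem {g} (hg : g ∈ ({integralI, integralW, integralD} : Set _)) :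
      GeneralLinearGroup.map reduction g ∈ integralG.map (GeneralLinearGroup.map reduction) :=
    Subgroup.mem_map_of_mem _ (Subgroup.subset_closure hg)
  exact GL_fin_two_zmod_three_eq_top_of_mem coe_map_reduction_integralI coe_map_reduction_integralW
    coe_map_reduction_integralD (mem (by simp)) (mem (by simp)) (mem (by simp))

lemma latticeHom_mem_unitaryGroup {g : GL (Fin 2) (ℤ√(-2))} (hg : g ∈ integralG) :
    (latticeHom g).val ∈ unitaryGroup (Fin 2) ℂ :=
  Submonoid.val_mem_of_mem_units _ <| G_le_units_unitaryGroup <|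
    map_latticeHom_integralG ▸ Subgroup.mem_map_of_mem latticeHom hg

theorem nonempty_mulEquiv_GL_fin_two_zmod_three : Nonempty (G ≃* GL (Fin 2) (ZMod 3)) := by
  let e : integralG ≃* G :=
    (integralG.equivMapOfInjective latticeHom latticeHom_injective).trans
      (MulEquiv.subgroupCongr map_latticeHom_integralG)
  let r : integralG →* GL (Fin 2) (ZMod 3) :=
    (GeneralLinearGroup.map reduction).domRestrict integralG
  have hr_inj : Function.Injective r := (injective_iff_map_eq_one r).mpr fun g hg ↦
    Subtype.ext (eq_one_of_map_reduction_eq_one (latticeHom_mem_unitaryGroup g.2) hg)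
  have hr_surj : Function.Surjective r := by
    rw [← MonoidHom.range_eq_top, MonoidHom.domRestrict_range]
    exact map_map_reduction_integralG
  exact ⟨e.symm.trans (.ofBijective r ⟨hr_inj, hr_surj⟩)⟩

end IntegralModel

theorem binary_octahedral_conj_classes : Nat.card (ConjClasses G) = 8 := by
  obtain ⟨e⟩ := nonempty_mulEquiv_GL_fin_two_zmod_three
  rw [card_conjClasses_congr e, card_conjClasses_GL_fin_two, Nat.card_zmod]
  norm_num
end
end

section
/- The two-element subgroup {1, -1} of H (consisting of the identity matrix and its negative) is a normal subgroup of H, and the quotient of H by this subgroup is isomorphic to the dihedral group of order 8. -/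
open Matrix Complex
open scoped MatrixGroups

noncomputable section

def H : Subgroup (GL (Fin 2) ℂ) :=
  Subgroup.closure {g : GL (Fin 2) ℂ |
    (g : Matrix (Fin 2) (Fin 2) ℂ) = jM ∨
    (g : Matrix (Fin 2) (Fin 2) ℂ) = dM}

/-- The proposition that the quotient of `Γ` by the normal subgroup `K`
is isomorphic to `Δ` as a group. -/
def QuotIsoTo {Γ : Type} [Group Γ] (K : Subgroup Γ) (hK : K.Normal)
    (Δ : Type) [Group Δ] : Prop := by
  letI := hK
  exact Nonempty ((Γ ⧸ K) ≃* Δ)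

/-!
A group generated by two involutions `a`, `b` is dihedral: `b` conjugates `a * b` to its inverse,
and `b` is not a power of `a * b`. In `H / {1, -1}` the images of `j` and `d` are involutions, since
`j² = -1` and `d² = 1`. Their product has order `4`, since `(j d)²` is the quarter turn
`!![0, -1; 1, 0]`, which is not `±1` but whose square is `-1`.
-/

section Dihedral

open DihedralGroup Subgroup

variable {G : Type*} [Group G] {n : ℕ} {x s a b : G}

/-- The homomorphism `i ↦ x ^ i` from `ZMod n` attached to an element with `x ^ n = 1`; the target
is written additively because Mathlib's `ZMod.lift` is. -/
def zmodPowersHom (hx : x ^ n = 1) : ZMod n →+ Additive G :=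
  ZMod.lift n ⟨zmultiplesHom (Additive G) (Additive.ofMul x), by simp [← ofMul_pow, hx]⟩

theorem toMul_zmodPowersHom_intCast (hx : x ^ n = 1) (k : ℤ) :
    (zmodPowersHom hx k).toMul = x ^ k := by
  simp [zmodPowersHom]

/-- The universal property of the dihedral group: an element `x` with `x ^ n = 1` and an involution
`s` inverting `x` define the homomorphism `r i ↦ x ^ i`, `sr i ↦ s * x ^ i`. -/
def dihedralLift (hx : x ^ n = 1) (hs : s ^ 2 = 1) (hsx : SemiconjBy s x x⁻¹) :
    DihedralGroup n →* G :=
  MonoidHom.mk'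
    (fun
      | r i => (zmodPowersHom hx i).toMul
      | sr i => s * (zmodPowersHom hx i).toMul) <| by
    have zpow_mul_s (k : ℤ) : x ^ k * s = s * x ^ (-k) := by
      simpa using (hsx.zpow_right (-k)).eq.symm
    rintro (i | i) (j | j) <;>
      obtain ⟨k, rfl⟩ := ZMod.intCast_surjective i <;>
      obtain ⟨l, rfl⟩ := ZMod.intCast_surjective j <;>
      simp only [r_mul_r, r_mul_sr, sr_mul_r, sr_mul_sr, ← Int.cast_add, ← Int.cast_sub,
        toMul_zmodPowersHom_intCast]
    · exact _root_.zpow_add x k l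
    · rw [← mul_assoc, zpow_mul_s, mul_assoc, ← _root_.zpow_add, neg_add_eq_sub]
    · rw [_root_.zpow_add, mul_assoc]
    · rw [mul_assoc, ← mul_assoc (x ^ k), zpow_mul_s, mul_assoc, ← _root_.zpow_add,
        ← mul_assoc, ← sq, hs, one_mul, neg_add_eq_sub]

section Lift

variable (hx : x ^ n = 1) (hs : s ^ 2 = 1) (hsx : SemiconjBy s x x⁻¹)

theorem dihedralLift_r_intCast (k : ℤ) : dihedralLift hx hs hsx (r k) = x ^ k :=
  toMul_zmodPowersHom_intCast hx k

theorem dihedralLift_sr_intCast (k : ℤ) : dihedralLift hx hs hsx (sr k) = s * x ^ k :=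
  congrArg (s * ·) (toMul_zmodPowersHom_intCast hx k)

theorem dihedralLift_injective (hn : orderOf x = n) (hmem : s ∉ zpowers x) :
    Function.Injective (dihedralLift hx hs hsx) := by
  rw [injective_iff_map_eq_one]
  rintro (i | i) h <;> obtain ⟨k, rfl⟩ := ZMod.intCast_surjective i
  · rw [dihedralLift_r_intCast, ← orderOf_dvd_iff_zpow_eq_one, hn] at h
    rw [(ZMod.intCast_zmod_eq_zero_iff_dvd k n).mpr h, r_zero]
  · rw [dihedralLift_sr_intCast, mul_eq_one_iff_eq_inv] at h
    exact absurd (h ▸ inv_mem (zpow_mem_zpowers x k)) hmem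

theorem closure_le_range_dihedralLift : closure {x, s} ≤ (dihedralLift hx hs hsx).range := by
  rw [closure_le, Set.pair_subset_iff]
  exact ⟨⟨r (1 : ℤ), by rw [dihedralLift_r_intCast, zpow_one]⟩,
    ⟨sr (0 : ℤ), by rw [dihedralLift_sr_intCast, zpow_zero, mul_one]⟩⟩

end Lift

theorem semiconjBy_mul_inv_of_sq_eq_one (ha : a ^ 2 = 1) (hb : b ^ 2 = 1) :
    SemiconjBy b (a * b) (a * b)⁻¹ := by
  have a_inv : a⁻¹ = a := inv_eq_of_mul_eq_one_left (sq a ▸ ha)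
  have b_inv : b⁻¹ = b := inv_eq_of_mul_eq_one_left (sq b ▸ hb)
  rw [SemiconjBy, _root_.mul_inv_rev, a_inv, b_inv, mul_assoc]

theorem notMem_zpowers_mul_of_orderOf_eq_two (ha : orderOf a = 2) (hb : orderOf b = 2) :
    b ∉ zpowers (a * b) := by
  rintro ⟨k, hk : (a * b) ^ k = b⟩
  obtain ⟨ha_sq, ha_ne⟩ := orderOf_eq_prime_iff.mp ha
  obtain ⟨hb_sq, hb_ne⟩ := orderOf_eq_prime_iff.mp hb
  have comm_mul : Commute (a * b) b := by
    simpa only [hk] using (Commute.refl (a * b)).zpow_right k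
  have comm_ab : Commute a b := by
    simpa using comm_mul.mul_left (Commute.refl b).inv_left
  have ab_sq : (a * b) ^ 2 = 1 := by
    rw [comm_ab.mul_pow, ha_sq, hb_sq, one_mul]
  obtain ⟨m, rfl | rfl⟩ := Int.even_or_odd' k
  · exact hb_ne (by simpa [_root_.zpow_mul, zpow_ofNat, ab_sq] using hk.symm)
  · exact ha_ne (by simpa [_root_.zpow_add, _root_.zpow_mul, zpow_ofNat, ab_sq] using hk)

/-- A group generated by two involutions is dihedral; the order of their product may be infinite,
recorded by `orderOf` as `0`, and then `DihedralGroup 0` is the infinite dihedral group. -/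
def dihedralGroupEquivOfInvolutions (ha : orderOf a = 2) (hb : orderOf b = 2)
    (hgen : closure {a, b} = ⊤) : DihedralGroup (orderOf (a * b)) ≃* G :=
  have ha_sq : a ^ 2 = 1 := ha ▸ pow_orderOf_eq_one a
  have hb_sq : b ^ 2 = 1 := hb ▸ pow_orderOf_eq_one b
  have hconj := semiconjBy_mul_inv_of_sq_eq_one ha_sq hb_sq
  MulEquiv.ofBijective (dihedralLift (pow_orderOf_eq_one (a * b)) hb_sq hconj) <| by
    refine ⟨dihedralLift_injective _ _ _ rfl (notMem_zpowers_mul_of_orderOf_eq_two ha hb), ?_⟩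
    rw [← MonoidHom.range_eq_top, eq_top_iff, ← hgen]
    refine le_trans ?_ (closure_le_range_dihedralLift _ _ _)
    have ab_mem : a * b ∈ closure {a * b, b} := subset_closure (by simp)
    have b_mem : b ∈ closure {a * b, b} := subset_closure (by simp)
    rw [closure_le, Set.pair_subset_iff]
    exact ⟨(mul_mem_cancel_right b_mem).mp ab_mem, b_mem⟩

end Dihedral

section Signs

open Subgroup

theorem mem_zpowers_neg_one_iff {G : Type*} [Group G] [HasDistribNeg G] {g : G} :
    g ∈ zpowers (-1 : G) ↔ g = 1 ∨ g = -1 := by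
  constructor
  · rintro ⟨k, rfl⟩
    exact k.even_or_odd.imp Even.neg_one_zpow Odd.neg_one_zpow
  · rintro (rfl | rfl)
    exacts [one_mem _, mem_zpowers _]

instance zpowers_neg_one_normal {G : Type*} [Group G] [HasDistribNeg G] :
    (zpowers (-1 : G)).Normal where
  conj_mem g hg x := by
    rcases mem_zpowers_neg_one_iff.mp hg with rfl | rfl <;> simp

variable {ι R : Type*} [Fintype ι] [DecidableEq ι] [CommRing R] {Γ : Subgroup (GL ι R)}

variable (Γ) in
/-- The scalar matrices `1` and `-1` in a matrix group `Γ`. It is not assumed that `-1 ∈ Γ`; if not,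
this is the trivial subgroup. -/
def signs : Subgroup Γ := (zpowers (-1)).subgroupOf Γ

theorem mem_signs_iff {g : Γ} :
    g ∈ signs Γ ↔ ((g : GL ι R) : Matrix ι ι R) = 1 ∨ ((g : GL ι R) : Matrix ι ι R) = -1 := by
  simp only [signs, mem_subgroupOf, mem_zpowers_neg_one_iff, Units.ext_iff, Units.val_one,
    Units.val_neg]

instance signs_normal : (signs Γ).Normal :=
  normal_subgroupOf

theorem mk_signs_ne_one_of_apply_ne_zero {g : Γ} {i j : ι} (hij : i ≠ j)
    (hg : ((g : GL ι R) : Matrix ι ι R) i j ≠ 0) : (g : Γ ⧸ signs Γ) ≠ 1 := by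
  rw [Ne, QuotientGroup.eq_one_iff, mem_signs_iff]
  rintro (h | h) <;> simp [h, hij] at hg

end Signs

theorem jM_mul_jM : jM * jM = -1 := by
  simp [jM, Matrix.one_fin_two]

theorem inv_sqrt_two_mul_self : (Real.sqrt 2 : ℂ)⁻¹ * (Real.sqrt 2 : ℂ)⁻¹ = 2⁻¹ := by
  rw [← mul_inv, ← Complex.ofReal_mul, Real.mul_self_sqrt zero_le_two, Complex.ofReal_ofNat]

theorem dM_mul_dM : dM * dM = 1 := by
  rw [dM, smul_mul_smul_comm, inv_sqrt_two_mul_self]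
  ext i j
  fin_cases i <;> fin_cases j <;> norm_num

theorem jM_mul_dM_sq : (jM * dM) ^ 2 = !![0, -1; 1, 0] := by
  rw [jM, dM, mul_smul_comm, smul_pow, sq, inv_sqrt_two_mul_self]
  norm_num [sq]

theorem jM_mul_dM_pow_four : (jM * dM) ^ 4 = -1 := by
  rw [pow_mul (jM * dM) 2 2, jM_mul_dM_sq]
  simp [sq, Matrix.one_fin_two]

/-- The generator `j` of `H`. -/
def jH : H :=
  ⟨⟨jM, -jM, by rw [mul_neg, jM_mul_jM, neg_neg], by rw [neg_mul, jM_mul_jM, neg_neg]⟩,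
    Subgroup.subset_closure (Or.inl rfl)⟩

/-- The generator `d` of `H`. -/
def dH : H :=
  ⟨⟨dM, dM, dM_mul_dM, dM_mul_dM⟩, Subgroup.subset_closure (Or.inr rfl)⟩

theorem closure_jH_dH : Subgroup.closure {jH, dH} = ⊤ := by
  refine top_le_iff.mp (Subgroup.closure_closure_coe_preimage.ge.trans ?_)
  refine Subgroup.closure_mono fun g hg => ?_
  exact hg.imp (fun h => Subtype.ext (Units.ext h)) (fun h => Subtype.ext (Units.ext h))

theorem closure_mk_jH_mk_dH :
    Subgroup.closure {(jH : H ⧸ signs H), (dH : H ⧸ signs H)} = ⊤ := by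
  have := congrArg (Subgroup.map (QuotientGroup.mk' (signs H))) closure_jH_dH
  rwa [MonoidHom.map_closure, Set.image_pair,
    Subgroup.map_top_of_surjective _ (QuotientGroup.mk'_surjective _)] at this

theorem orderOf_mk_jH : orderOf (jH : H ⧸ signs H) = 2 := by
  refine orderOf_eq_prime ?_ (mk_signs_ne_one_of_apply_ne_zero zero_ne_one ?_)
  · rw [← QuotientGroup.mk_pow, QuotientGroup.eq_one_iff, mem_signs_iff, sq]
    exact Or.inr jM_mul_jM
  · simp [jH, jM]

theorem orderOf_mk_dH : orderOf (dH : H ⧸ signs H) = 2 := by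
  refine orderOf_eq_prime ?_ (mk_signs_ne_one_of_apply_ne_zero zero_ne_one ?_)
  · rw [← QuotientGroup.mk_pow, QuotientGroup.eq_one_iff, mem_signs_iff, sq]
    exact Or.inl dM_mul_dM
  · simp [dH, dM]

theorem orderOf_mk_jH_mul_mk_dH : orderOf ((jH : H ⧸ signs H) * (dH : H ⧸ signs H)) = 4 := by
  refine orderOf_eq_prime_pow (p := 2) (n := 1) ?_ ?_
  · have : (((jH * dH) ^ 2 : H) : GL (Fin 2) ℂ).val = !![0, -1; 1, 0] := jM_mul_dM_sq
    refine mk_signs_ne_one_of_apply_ne_zero (g := (jH * dH) ^ 2) zero_ne_one ?_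
    rw [this]
    simp
  · rw [← QuotientGroup.mk_mul, ← QuotientGroup.mk_pow, QuotientGroup.eq_one_iff, mem_signs_iff]
    exact Or.inr jM_mul_dM_pow_four

theorem quotient_of_H_by_signs_is_dihedral :
    ∃ K : Subgroup H,
      (∀ g : H, g ∈ K ↔
        ((g : GL (Fin 2) ℂ) : Matrix (Fin 2) (Fin 2) ℂ) = 1 ∨
        ((g : GL (Fin 2) ℂ) : Matrix (Fin 2) (Fin 2) ℂ) = -1) ∧
      ∃ hK : K.Normal, QuotIsoTo K hK (DihedralGroup 4) := by
  refine ⟨signs H, fun _ => mem_signs_iff, signs_normal, ?_⟩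
  have e := dihedralGroupEquivOfInvolutions orderOf_mk_jH orderOf_mk_dH closure_mk_jH_mk_dH
  rw [orderOf_mk_jH_mul_mk_dH] at e
  exact ⟨e.symm⟩
end
end

section
/- The subgroup of GL(3,ℝ) generated by the two matrices P := !![0,1,0;0,0,1;1,0,0] and N := !![1,0,0;0,0,1;0,-1,0] consists entirely of special orthogonal matrices (orthogonal of determinant 1), has order 24, and is isomorphic to the symmetric group on 4 letters. -/
/-!
The cube has four diagonals, and suitable endpoints of them are the vertices of a regular
tetrahedron. The linear symmetries of the tetrahedron represent `S₄`; odd permutations give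
matrices of determinant `-1`, so twisting by the sign character yields rotations. The twist still
permutes the diagonals as lines, hence remains faithful. The rotations `P` and `N` are the images
of a 3-cycle and a 4-cycle whose product is a transposition of two vertices adjacent in the
4-cycle. These generate `S₄`, so the image of the representation is the group `P` and `N` generate.
-/

open Matrix
open scoped MatrixGroups

noncomputable section

def P : Matrix (Fin 3) (Fin 3) ℝ := !![0, 1, 0; 0, 0, 1; 1, 0, 0]
def N : Matrix (Fin 3) (Fin 3) ℝ := !![1, 0, 0; 0, 0, 1; 0, -1, 0]

def S : Subgroup (GL (Fin 3) ℝ) :=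
  Subgroup.closure {g : GL (Fin 3) ℝ |
    (g : Matrix (Fin 3) (Fin 3) ℝ) = P ∨
    (g : Matrix (Fin 3) (Fin 3) ℝ) = N}

section RegularSimplex

variable {m n K : Type*} [Fintype m] [DecidableEq m] [Fintype n] [DecidableEq n] [Field K]

/-- The columns of `V` are the vertices of a regular simplex centred at the origin and spanning
`m → K`, scaled so that distinct vertices have inner product `-1`; each vertex then has squared
length `card n - 1`. -/
structure IsRegularSimplex (V : Matrix m n K) : Prop where
  card_ne_zero : (Fintype.card n : K) ≠ 0
  mul_transpose_self : V * Vᵀ = (Fintype.card n : K) • 1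
  transpose_mul_self : Vᵀ * V = (Fintype.card n : K) • 1 - of fun _ _ ↦ 1

namespace IsRegularSimplex

variable {V : Matrix m n K}

theorem eq_of_mul_eq (hV : IsRegularSimplex V) {l : Type*} {A B : Matrix l m K}
    (h : A * V = B * V) : A = B := by
  have h' : A * (V * Vᵀ) = B * (V * Vᵀ) := by rw [← Matrix.mul_assoc, h, Matrix.mul_assoc]
  simpa only [hV.mul_transpose_self, Matrix.mul_smul, Matrix.mul_one,
    smul_right_inj hV.card_ne_zero] using h'

theorem mul_ones (hV : IsRegularSimplex V) : V * of (fun _ _ : n ↦ (1 : K)) = 0 := by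
  have h : V * (Vᵀ * V) = (V * Vᵀ) * V := (Matrix.mul_assoc _ _ _).symm
  simpa [hV.mul_transpose_self, hV.transpose_mul_self, Matrix.mul_sub] using h

/-- The linear symmetry of the simplex with vertices `V` that permutes the vertices by `σ`,
multiplied by the sign of `σ`. The factor `(card n)⁻¹ • Vᵀ` is a right inverse of `V`. -/
def signedSymm (V : Matrix m n K) (σ : Equiv.Perm n) : Matrix m m K :=
  Equiv.Perm.sign σ • (Fintype.card n : K)⁻¹ • (V.submatrix id σ * Vᵀ)

theorem signedSymm_mul_self (hV : IsRegularSimplex V) (σ : Equiv.Perm n) :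
    signedSymm V σ * V = Equiv.Perm.sign σ • V.submatrix id σ := by
  have sum_columns : V.submatrix id σ * of (fun _ _ : n ↦ (1 : K)) = 0 :=
    (V.submatrix_mul_equiv (of fun _ _ ↦ (1 : K)) id σ id).trans (by rw [hV.mul_ones]; rfl)
  simp only [signedSymm, Matrix.smul_mul, Matrix.mul_assoc, hV.transpose_mul_self, Matrix.mul_sub,
    sum_columns, sub_zero, Matrix.mul_smul, Matrix.mul_one, inv_smul_smul₀ hV.card_ne_zero]

theorem eq_signedSymm (hV : IsRegularSimplex V) {A : Matrix m m K} {σ : Equiv.Perm n}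
    (h : A * V = Equiv.Perm.sign σ • V.submatrix id σ) : A = signedSymm V σ :=
  hV.eq_of_mul_eq (h.trans (hV.signedSymm_mul_self σ).symm)

/-- The representation of the symmetric group on the vertices of a regular simplex, twisted by
the sign character. -/
def signedRep (hV : IsRegularSimplex V) : Equiv.Perm n →* Matrix m m K where
  toFun := signedSymm V
  map_one' := (hV.eq_signedSymm (by simp)).symm
  map_mul' σ τ := by
    refine (hV.eq_signedSymm ?_).symm
    calc signedSymm V σ * signedSymm V τ * V
        = Equiv.Perm.sign τ • (signedSymm V σ * V).submatrix id τ := by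
          rw [Matrix.mul_assoc, hV.signedSymm_mul_self, Matrix.mul_smul]
          rfl
      _ = Equiv.Perm.sign (σ * τ) • V.submatrix id (σ * τ) := by
          rw [hV.signedSymm_mul_self, map_mul, mul_comm, mul_smul]
          rfl

theorem signedRep_injective (hV : IsRegularSimplex V) (card_ne_two : (Fintype.card n : K) ≠ 2) :
    Function.Injective hV.signedRep := by
  refine (injective_iff_map_eq_one _).mpr fun σ hσ ↦ Equiv.ext fun k ↦ ?_
  have columns : V = Equiv.Perm.sign σ • V.submatrix id σ := by
    rw [← hV.signedSymm_mul_self]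
    exact (Matrix.one_mul V).symm.trans (congrArg (· * V) hσ.symm)
  by_contra (hk : σ k ≠ k)
  have gram : Vᵀ * V = Equiv.Perm.sign σ • (Vᵀ * V).submatrix id σ :=
    (congrArg (Vᵀ * ·) columns).trans (Matrix.mul_smul ..)
  have card_sub_one : (Fintype.card n : K) - 1 = -(Equiv.Perm.sign σ • 1) := by
    simpa [hV.transpose_mul_self, Matrix.one_apply, hk.symm] using congrFun₂ gram k k
  rcases Int.units_eq_one_or (Equiv.Perm.sign σ) with hsign | hsign
  · rw [hsign, one_smul] at card_sub_one
    exact hV.card_ne_zero (by linear_combination card_sub_one)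
  · rw [hsign, Units.neg_smul, one_smul] at card_sub_one
    exact card_ne_two (by linear_combination card_sub_one)

end IsRegularSimplex

end RegularSimplex

/-- The diagonals of the cube `[-1, 1]³`, as columns. Each is oriented so that the four endpoints
form a regular tetrahedron, and they are numbered so that `N` permutes them cyclically. -/
def cubeDiagonals : Matrix (Fin 3) (Fin 4) ℝ :=
  !![1, -1, 1, -1; 1, -1, -1, 1; 1, 1, -1, -1]

theorem isRegularSimplex_cubeDiagonals : IsRegularSimplex cubeDiagonals where
  card_ne_zero := by simp
  mul_transpose_self := by
    ext i j
    fin_cases i <;> fin_cases j <;> norm_num [cubeDiagonals, Matrix.mul_apply, Fin.sum_univ_succ]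
  transpose_mul_self := by
    ext i j
    fin_cases i <;> fin_cases j <;> norm_num [cubeDiagonals, Matrix.mul_apply, Fin.sum_univ_succ]

/-- The representation of `S₄` by rotations of the cube, through its action on the diagonals. -/
def cubeRep : Equiv.Perm (Fin 4) →* GL (Fin 3) ℝ :=
  isRegularSimplex_cubeDiagonals.signedRep.toHomUnits

theorem cubeRep_injective : Function.Injective cubeRep := fun _ _ h ↦
  isRegularSimplex_cubeDiagonals.signedRep_injective (by norm_num) (congrArg Units.val h)

theorem cubeRep_cycle : (cubeRep c[1, 3, 2] : Matrix (Fin 3) (Fin 3) ℝ) = P := by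
  refine (isRegularSimplex_cubeDiagonals.eq_signedSymm ?_).symm
  have hsign : Equiv.Perm.sign (c[1, 3, 2] : Equiv.Perm (Fin 4)) = 1 := by decide
  have hcycle : ⇑(c[1, 3, 2] : Equiv.Perm (Fin 4)) = ![0, 3, 1, 2] := by decide
  rw [hsign, hcycle, one_smul]
  ext i j
  fin_cases i <;> fin_cases j <;> simp [P, cubeDiagonals, Matrix.mul_apply, Fin.sum_univ_succ]

theorem cubeRep_finRotate : (cubeRep (finRotate 4) : Matrix (Fin 3) (Fin 3) ℝ) = N := by
  refine (isRegularSimplex_cubeDiagonals.eq_signedSymm ?_).symm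
  have hsign : Equiv.Perm.sign (finRotate 4) = -1 := by decide
  rw [hsign, Units.neg_smul, one_smul]
  ext i j
  fin_cases i <;> fin_cases j <;> simp [N, cubeDiagonals, Matrix.mul_apply, Fin.sum_univ_succ]

theorem closure_cycle_finRotate :
    Subgroup.closure {c[1, 3, 2], finRotate 4} = (⊤ : Subgroup (Equiv.Perm (Fin 4))) := by
  have swap_eq : finRotate 4 * c[1, 3, 2] = Equiv.swap 0 (finRotate 4 0) := by decide
  rw [eq_top_iff, ← Equiv.Perm.closure_cycle_adjacent_swap isCycle_finRotate support_finRotate 0,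
    Subgroup.closure_le, ← swap_eq]
  have hcycle := Subgroup.mem_closure_of_mem (s := {c[1, 3, 2], finRotate 4}) (Set.mem_insert _ _)
  have hrot : finRotate 4 ∈ Subgroup.closure {c[1, 3, 2], finRotate 4} :=
    Subgroup.mem_closure_of_mem (by simp)
  exact Set.pair_subset hrot (mul_mem hrot hcycle)

theorem range_cubeRep : cubeRep.range = S := by
  rw [MonoidHom.range_eq_map, ← closure_cycle_finRotate, MonoidHom.map_closure, Set.image_pair, S,
    ← cubeRep_cycle, ← cubeRep_finRotate]
  simp only [Units.val_inj]
  rfl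

theorem P_mem_specialOrthogonalGroup : P ∈ specialOrthogonalGroup (Fin 3) ℝ := by
  refine mem_specialOrthogonalGroup_iff.mpr ⟨(mem_orthogonalGroup_iff _ _).mpr ?_, ?_⟩
  · ext i j
    fin_cases i <;> fin_cases j <;> simp [P, Matrix.mul_apply, Fin.sum_univ_succ]
  · simp [P, det_fin_three]

theorem N_mem_specialOrthogonalGroup : N ∈ specialOrthogonalGroup (Fin 3) ℝ := by
  refine mem_specialOrthogonalGroup_iff.mpr ⟨(mem_orthogonalGroup_iff _ _).mpr ?_, ?_⟩
  · ext i j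
    fin_cases i <;> fin_cases j <;> simp [N, Matrix.mul_apply, Fin.sum_univ_succ]
  · simp [N, det_fin_three]

theorem mem_specialOrthogonalGroup_of_mem_S {g : GL (Fin 3) ℝ} (hg : g ∈ S) :
    (g : Matrix (Fin 3) (Fin 3) ℝ) ∈ specialOrthogonalGroup (Fin 3) ℝ := by
  have S_le : S ≤ (specialOrthogonalGroup (Fin 3) ℝ).subtype.toHomUnits.range := by
    refine (Subgroup.closure_le _).mpr ?_
    rintro g (hP | hN)
    · exact ⟨⟨P, P_mem_specialOrthogonalGroup⟩, Units.ext hP.symm⟩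
    · exact ⟨⟨N, N_mem_specialOrthogonalGroup⟩, Units.ext hN.symm⟩
  obtain ⟨A, rfl⟩ := S_le hg
  exact A.2

theorem rotation_group_of_cube :
    (∀ g ∈ S, (g : Matrix (Fin 3) (Fin 3) ℝ) ∈ Matrix.orthogonalGroup (Fin 3) ℝ ∧
      (g : Matrix (Fin 3) (Fin 3) ℝ).det = 1) ∧
    Nat.card S = 24 ∧
    Nonempty (S ≃* Equiv.Perm (Fin 4)) := by
  let e : Equiv.Perm (Fin 4) ≃* S :=
    (MonoidHom.ofInjective cubeRep_injective).trans (MulEquiv.subgroupCongr range_cubeRep)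
  refine ⟨fun g hg ↦ mem_specialOrthogonalGroup_iff.mp (mem_specialOrthogonalGroup_of_mem_S hg),
    ?_, ⟨e.symm⟩⟩
  rw [← Nat.card_congr e.toEquiv, Nat.card_perm, Nat.card_fin]
  rfl
end
end
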